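/- With W, δ, e, N, M and W_δ as in the context: (1) Player I has a winning strategy in the binary Gale–Stewart game with target set W_δ if and only if Player I has a winning strategy in the binary Gale–Stewart game with target set W; (2) Player II has a winning strategy in the game with target set W_δ if and only if Player II has a winning strategy in the game with target set W. -/

import Mathlib

open Metric Set Filter MeasureTheory

noncomputable local instance : MetricSpace (ℕ → Bool) := PiNat.metricSpace

/-- The finite prefix `⟨x 0, …, x (n-1)⟩` of a play. -/
def prefixList (x : ℕ → Bool) (n : ℕ) : List Bool := List.ofFn fun i : Fin n => x i

/-- `x` is a play consistent with the Player I pure strategy `sI`. -/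
def ConsistentI (sI : List Bool → Bool) (x : ℕ → Bool) : Prop :=
  ∀ n : ℕ, Even n → x n = sI (prefixList x n)

/-- `x` is a play consistent with the Player II pure strategy `sII`. -/
def ConsistentII (sII : List Bool → Bool) (x : ℕ → Bool) : Prop :=
  ∀ n : ℕ, Odd n → x n = sII (prefixList x n)

/-- `x` is a play consistent with the strategy `s` of the player moving at the positions of
parity `p`. -/
def ConsistentParity (p : ℕ) (s : List Bool → Bool) (x : ℕ → Bool) : Prop :=
  ∀ n : ℕ, n % 2 = p → x n = s (prefixList x n)

theorem consistentI_iff_consistentParity (s : List Bool → Bool) (x : ℕ → Bool) :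
    ConsistentI s x ↔ ConsistentParity 0 s x := by
  simp only [ConsistentI, ConsistentParity, Nat.even_iff]

theorem consistentII_iff_consistentParity (s : List Bool → Bool) (x : ℕ → Bool) :
    ConsistentII s x ↔ ConsistentParity 1 s x := by
  simp only [ConsistentII, ConsistentParity, Nat.odd_iff]

@[simp]
theorem length_prefixList (x : ℕ → Bool) (n : ℕ) : (prefixList x n).length = n := by
  simp [prefixList]

theorem getD_prefixList (x : ℕ → Bool) {n i : ℕ} (hi : i < n) :
    (prefixList x n).getD i false = x i := by
  simp [prefixList, List.getD_eq_getElem?_getD, hi]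

theorem prefixList_congr {x y : ℕ → Bool} {n : ℕ} (h : ∀ i < n, x i = y i) :
    prefixList x n = prefixList y n := by
  simp only [prefixList]
  congr 1
  funext i
  exact h i i.2

/-- The strategy that plays `s` on the positions in the range of `e`, and `false` elsewhere. -/
noncomputable def spreadStrategy (e : ℕ → ℕ) (s : List Bool → Bool) (l : List Bool) : Bool :=
  Function.extend e (fun k => s (prefixList (fun i => l.getD (e i) false) k))
    (fun _ => false) l.length

theorem ConsistentParity.comp_of_spreadStrategy {e : ℕ → ℕ} (he : StrictMono e)
    (hpar : ∀ k, e k % 2 = k % 2) {p : ℕ} {s : List Bool → Bool} {x : ℕ → Bool}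
    (hx : ConsistentParity p (spreadStrategy e s) x) : ConsistentParity p s (x ∘ e) := by
  intro k hk
  rw [Function.comp_apply, hx (e k) ((hpar k).trans hk), spreadStrategy, length_prefixList,
    he.injective.extend_apply]
  exact congrArg s (prefixList_congr fun i hi => getD_prefixList x (he hi))

theorem ConsistentParity.eq_false_of_spreadStrategy {e : ℕ → ℕ} {p : ℕ} {s : List Bool → Bool}
    {x : ℕ → Bool} (hx : ConsistentParity p (spreadStrategy e s) x) {n : ℕ} (hn : n % 2 = p)
    (hne : n ∉ Set.range e) : x n = false := by
  rw [hx n hn, spreadStrategy, length_prefixList, Function.extend_apply' _ _ _ hne]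

/-- The play in which the player of parity `p` follows `s`, while the opponent plays `y k` at
position `e k` and `false` outside the range of `e`. -/
noncomputable def liftPlay (e : ℕ → ℕ) (p : ℕ) (s : List Bool → Bool) (y : ℕ → Bool) (n : ℕ) :
    Bool :=
  if n % 2 = p then s (List.ofFn fun i : Fin n => liftPlay e p s y i)
  else Function.extend e y (fun _ => false) n
termination_by n
decreasing_by exact i.2

theorem consistentParity_liftPlay (e : ℕ → ℕ) (p : ℕ) (s : List Bool → Bool) (y : ℕ → Bool) :
    ConsistentParity p s (liftPlay e p s y) := by
  intro n hn
  rw [liftPlay, if_pos hn, prefixList]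

theorem liftPlay_of_ne (e : ℕ → ℕ) {p : ℕ} (s : List Bool → Bool) (y : ℕ → Bool) {n : ℕ}
    (hn : n % 2 ≠ p) : liftPlay e p s y n = Function.extend e y (fun _ => false) n := by
  rw [liftPlay, if_neg hn]

theorem liftPlay_congr {e : ℕ → ℕ} (he : StrictMono e) (hpar : ∀ k, e k % 2 = k % 2) {p : ℕ}
    (s : List Bool → Bool) {y z : ℕ → Bool} {n : ℕ} (hn : n % 2 = p)
    (h : ∀ i < n, y i = z i) {m : ℕ} (hm : m ≤ e n) :
    liftPlay e p s y m = liftPlay e p s z m := by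
  induction m using Nat.strong_induction_on with
  | _ m ih =>
    by_cases hmp : m % 2 = p
    · rw [consistentParity_liftPlay e p s y m hmp, consistentParity_liftPlay e p s z m hmp]
      exact congrArg s (prefixList_congr fun i hi => ih i hi (hi.le.trans hm))
    · rw [liftPlay_of_ne e s y hmp, liftPlay_of_ne e s z hmp]
      by_cases hme : ∃ k, e k = m
      · obtain ⟨k, rfl⟩ := hme
        rw [he.injective.extend_apply, he.injective.extend_apply]
        refine h k (lt_of_le_of_ne (he.le_iff_le.mp hm) ?_)
        rintro rfl
        exact hmp ((hpar k).trans hn)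
      · rw [Function.extend_apply' _ _ _ hme, Function.extend_apply' _ _ _ hme]

/-- The strategy that answers as `s` does at the positions `e k`, when the opponent of `s` plays
`false` outside the range of `e`. -/
noncomputable def restrictStrategy (e : ℕ → ℕ) (p : ℕ) (s : List Bool → Bool) (l : List Bool) :
    Bool :=
  liftPlay e p s (fun k => l.getD k false) (e l.length)

theorem ConsistentParity.liftPlay_comp {e : ℕ → ℕ} (he : StrictMono e)
    (hpar : ∀ k, e k % 2 = k % 2) {p : ℕ} {s : List Bool → Bool} {y : ℕ → Bool}
    (hy : ConsistentParity p (restrictStrategy e p s) y) (k : ℕ) :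
    liftPlay e p s y (e k) = y k := by
  by_cases hk : k % 2 = p
  · rw [hy k hk, restrictStrategy, length_prefixList]
    exact liftPlay_congr he hpar s hk (fun i hi => (getD_prefixList y hi).symm) le_rfl
  · rw [liftPlay_of_ne e s y (by rwa [hpar]), he.injective.extend_apply]

/-- A player has a winning strategy in the game with target set `W_δ` iff she has one in the
game with target set `W`. -/
theorem winning_Wdelta_iff_winning_W (δ : ℝ) (hδ : δ ∈ Set.Icc (1 / 2 : ℝ) 1)
    (e : ℕ → ℕ) (he : StrictMono e)
    (heEven : ∀ ℓ : ℕ, Even (e (2 * ℓ)) ∧ e (2 * ℓ + 1) = e (2 * ℓ) + 1)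
    (hN : Tendsto (fun n : ℕ => ((Set.range e ∩ Set.Iic n).ncard : ℝ) / (n + 1))
      atTop (nhds 0))
    (M : Set ℕ) (hMinf : M.Infinite) (hMeven : ∀ k ∈ M, Even k)
    (hMN : Disjoint M (Set.range e))
    (hM : Tendsto (fun n : ℕ => ((M ∩ Set.Iic n).ncard : ℝ) / (n + 1))
      atTop (nhds (δ - 1 / 2)))
    (W : Set (ℕ → Bool)) (hW0 : (fun _ => false) ∈ W)
    (Wδ : Set (ℕ → Bool))
    (hWδ : Wδ = {x : ℕ → Bool |
      (∀ k : ℕ, Even k → k ∉ M ∪ Set.range e → x k = false) ∧ (fun k => x (e k)) ∈ W}) :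
    ((∃ sI : List Bool → Bool, ∀ x : ℕ → Bool, ConsistentI sI x → x ∈ Wδ) ↔
      (∃ sI : List Bool → Bool, ∀ x : ℕ → Bool, ConsistentI sI x → x ∈ W)) ∧
    ((∃ sII : List Bool → Bool, ∀ x : ℕ → Bool, ConsistentII sII x → x ∉ Wδ) ↔
      (∃ sII : List Bool → Bool, ∀ x : ℕ → Bool, ConsistentII sII x → x ∉ W)) := by
  have hpar : ∀ k, e k % 2 = k % 2 := by
    intro k
    obtain ⟨ℓ, rfl | rfl⟩ := Nat.even_or_odd' k
    · have := Nat.even_iff.mp (heEven ℓ).1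
      omega
    · have := Nat.even_iff.mp (heEven ℓ).1
      have := (heEven ℓ).2
      omega
  subst hWδ
  simp only [consistentI_iff_consistentParity, consistentII_iff_consistentParity]
  refine ⟨⟨?_, ?_⟩, ⟨?_, ?_⟩⟩
  · rintro ⟨s, hs⟩
    refine ⟨restrictStrategy e 0 s, fun y hy => ?_⟩
    have hmem := (hs _ (consistentParity_liftPlay e 0 s y)).2
    rwa [funext (hy.liftPlay_comp he hpar)] at hmem
  · rintro ⟨s, hs⟩
    refine ⟨spreadStrategy e s, fun x hx =>
      ⟨fun k hk hkN => ?_, hs _ (hx.comp_of_spreadStrategy he hpar)⟩⟩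
    exact hx.eq_false_of_spreadStrategy (Nat.even_iff.mp hk) fun h => hkN (Or.inr h)
  · rintro ⟨s, hs⟩
    refine ⟨restrictStrategy e 1 s, fun y hy hyW => ?_⟩
    refine hs _ (consistentParity_liftPlay e 1 s y) ⟨fun k hk hkN => ?_, ?_⟩
    · rw [liftPlay_of_ne e s y (by rw [Nat.even_iff.mp hk]; exact zero_ne_one),
        Function.extend_apply' _ _ _ fun h => hkN (Or.inr h)]
    · rwa [funext (hy.liftPlay_comp he hpar)]
  · rintro ⟨s, hs⟩
    exact ⟨spreadStrategy e s, fun x hx hxW => hs _ (hx.comp_of_spreadStrategy he hpar) hxW.2⟩
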